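/- In a nilpotent differential graded Lie algebra L, the gauge action of (L_0, *) (with the Baker-Campbell-Hausdorff product) on MC(L) is a group action: 0 ∙ z = z and x ∙ (y ∙ z) = (x * y) ∙ z. -/

import Mathlib

namespace Paper

variable {L : Type*} [AddCommGroup L] [Module ℚ L]

/-- The axioms of a ℤ-graded differential graded Lie algebra over ℚ, on a ℚ-vector space `L`
with grading `deg`, bilinear bracket `bk` and differential `d` of degree `-1`:
graded antisymmetry, graded Jacobi identity, graded Leibniz rule and `d ∘ d = 0`. -/
structure IsDGLA (deg : ℤ → Submodule ℚ L) (bk : L →ₗ[ℚ] L →ₗ[ℚ] L) (d : L →ₗ[ℚ] L) : Prop where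
  bk_deg : ∀ (i j : ℤ) (x y : L), x ∈ deg i → y ∈ deg j → bk x y ∈ deg (i + j)
  antisymm : ∀ (i j : ℤ) (x y : L), x ∈ deg i → y ∈ deg j →
    bk x y = -(((-1 : ℚ) ^ (i * j)) • bk y x)
  jacobi : ∀ (i j : ℤ) (x y z : L), x ∈ deg i → y ∈ deg j →
    bk x (bk y z) = bk (bk x y) z + ((-1 : ℚ) ^ (i * j)) • bk y (bk x z)
  d_deg : ∀ (i : ℤ) (x : L), x ∈ deg i → d x ∈ deg (i - 1)
  leibniz : ∀ (i : ℤ) (x y : L), x ∈ deg i →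
    d (bk x y) = bk (d x) y + ((-1 : ℚ) ^ i) • bk x (d y)
  d_sq : ∀ x : L, d (d x) = 0
  deg_spans : (⨆ i : ℤ, deg i) = ⊤

/-- Iterated adjoint action: `adp bk x n z = ad_x^n (z)`. -/
def adp (bk : L →ₗ[ℚ] L →ₗ[ℚ] L) (x : L) (n : ℕ) (z : L) : L := (fun t => bk x t)^[n] z

/-- A Maurer-Cartan element: `u` of degree `-1` with `d u = -½[u,u]`. -/
def IsMC (deg : ℤ → Submodule ℚ L) (bk : L →ₗ[ℚ] L →ₗ[ℚ] L) (d : L →ₗ[ℚ] L) (u : L) : Prop :=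
  u ∈ deg (-1) ∧ d u = -((1 / 2 : ℚ) • bk u u)

/-- Right-nested iterated bracket of a word with respect to the bilinear bracket `bk`. -/
def wordBk (bk : L →ₗ[ℚ] L →ₗ[ℚ] L) : List L → L
  | [] => 0
  | [a] => a
  | a :: rest => bk a (wordBk bk rest)

/-- Dynkin term of the BCH series with respect to `bk`. -/
def dynkinTermBk (bk : L →ₗ[ℚ] L →ₗ[ℚ] L) (x y : L) (ps : List (ℕ × ℕ)) : L :=
  wordBk bk ((ps.map fun pq => List.replicate pq.1 x ++ List.replicate pq.2 y)).flatten

/-- Dynkin coefficient of the BCH series. -/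
def dynkinCoeff (ps : List (ℕ × ℕ)) : ℚ :=
  if ps.all fun pq => 0 < pq.1 + pq.2 then
    (-1 : ℚ) ^ (ps.length - 1) /
      ((ps.length : ℚ) * (((ps.map fun pq => pq.1 + pq.2).sum : ℕ) : ℚ) *
        (((ps.map fun pq => pq.1.factorial * pq.2.factorial).prod : ℕ) : ℚ))
  else 0

/-- The Baker-Campbell-Hausdorff product (Dynkin's formula), truncated at bracket
length `N`; in a nilpotent algebra where all brackets of length `≥ N` vanish this is
the full BCH product. -/
noncomputable def bch (bk : L →ₗ[ℚ] L →ₗ[ℚ] L) (N : ℕ) (x y : L) : L :=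
  ∑ n ∈ Finset.range N, ∑ f : Fin (n + 1) → Fin (N + 1) × Fin (N + 1),
    dynkinCoeff (List.ofFn fun i => (((f i).1 : ℕ), ((f i).2 : ℕ))) •
      dynkinTermBk bk x y (List.ofFn fun i => (((f i).1 : ℕ), ((f i).2 : ℕ)))

/-- The gauge action `x ∙ z = e^{ad_x}(z) - ((e^{ad_x}-1)/ad_x)(dx)`, a finite sum in a
nilpotent algebra with `ad^N = 0`. -/
noncomputable def gauge (bk : L →ₗ[ℚ] L →ₗ[ℚ] L) (d : L →ₗ[ℚ] L) (N : ℕ) (x z : L) : L :=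
  (∑ n ∈ Finset.range N, ((n.factorial : ℚ)⁻¹) • adp bk x n z) -
    ∑ n ∈ Finset.range N, (((n + 1).factorial : ℚ)⁻¹) • adp bk x n (d x)

/-!
The gauge action is the restriction to the affine hyperplane `c = 1` of the exponential of the
linear action `x • (z, c) = ([x, z] - c • d x, 0)` on `L × ℚ`, a Lie algebra action of `L₀` because
`d` is a derivation. Hence everything follows from `exp x * exp y = exp (bch x y)` for
elements `x`, `y` of an associative algebra all of whose long words vanish.

For this, put `z = log (exp x * exp y)`, so that `ad z = log (exp (ad x) * exp (ad y))`. Suppose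
that some `e` satisfies `[e, x] = x` and `[e, y] = y`. A product of operators `ad x`, `ad y` sends
`e` to minus the bracketed word, so `[e, z] = -ad z e` is the Dynkin series with every term
multiplied by the length of its word. Since `[e, ·]` multiplies a word by its length and is
injective on positive degrees, `z` is the Dynkin series itself. Such an `e` becomes available after
replacing `x` and `y` by `x T` and `y T` acting on polynomials in `T`: take `e = T d/dT`, and set
`T = 1` at the end.
-/

section NilpotentEvaluation

open PowerSeries

variable {R A V : Type*} [CommRing R] [Ring A] [Algebra R A] {u : A}

theorem aeval_coe_trunc_of_pow_eq_zero {K : ℕ} (hu : u ^ K = 0) (p : Polynomial R) :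
    Polynomial.aeval u (trunc K (p : R⟦X⟧)) = Polynomial.aeval u p := by
  obtain ⟨q, hq⟩ : Polynomial.X ^ K ∣ trunc K (p : R⟦X⟧) - p :=
    Polynomial.X_pow_dvd_iff.2 fun n hn => by simp [coeff_trunc, hn]
  rw [← sub_eq_zero, ← map_sub, hq, map_mul, map_pow, Polynomial.aeval_X, hu, zero_mul]

/-- Evaluation of power series at a nilpotent element, a replacement for a convergent power series
functional calculus. Truncating at the nilpotency class of `u` loses nothing. -/
noncomputable def nilEval (hu : IsNilpotent u) : R⟦X⟧ →ₐ[R] A :=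
  AlgHom.ofLinearMap ((Polynomial.aeval u).toLinearMap ∘ₗ trunc (nilpotencyClass u))
    (by
      rw [LinearMap.comp_apply, ← Polynomial.coe_one, AlgHom.toLinearMap_apply,
        aeval_coe_trunc_of_pow_eq_zero (pow_nilpotencyClass hu), map_one])
    (fun f g => by
      simp only [LinearMap.comp_apply, AlgHom.toLinearMap_apply]
      rw [← map_mul, ← trunc_trunc_mul_trunc, ← Polynomial.coe_mul,
        aeval_coe_trunc_of_pow_eq_zero (pow_nilpotencyClass hu)])

theorem nilEval_coe (hu : IsNilpotent u) (p : Polynomial R) :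
    nilEval hu (p : R⟦X⟧) = Polynomial.aeval u p :=
  aeval_coe_trunc_of_pow_eq_zero (pow_nilpotencyClass hu) p

@[simp]
theorem nilEval_X (hu : IsNilpotent u) : nilEval hu (X : R⟦X⟧) = u := by
  rw [← Polynomial.coe_X, nilEval_coe, Polynomial.aeval_X]

theorem nilEval_smul_eq_sum [AddCommGroup V] [Module R V] [Module A V] [IsScalarTower R A V]
    (hu : IsNilpotent u) {K : ℕ} {v : V} (hv : u ^ K • v = 0) (f : R⟦X⟧) :
    nilEval hu f • v = ∑ n ∈ Finset.range K, coeff n f • u ^ n • v := by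
  nth_rw 1 [eq_shift_mul_X_pow_add_trunc K f]
  rw [map_add, map_mul, map_pow, nilEval_X, nilEval_coe, Polynomial.aeval_def,
    eval₂_trunc_eq_sum_range, add_smul, mul_smul, hv, smul_zero, zero_add, Finset.sum_smul]
  simp only [← Algebra.smul_def, smul_assoc]

theorem nilEval_eq_sum (hu : IsNilpotent u) {K : ℕ} (hK : u ^ K = 0) (f : R⟦X⟧) :
    nilEval hu f = ∑ n ∈ Finset.range K, coeff n f • u ^ n := by
  simpa using nilEval_smul_eq_sum hu (v := (1 : A)) (by simp [hK]) f

theorem isNilpotent_nilEval (hu : IsNilpotent u) {f : R⟦X⟧} (hf : constantCoeff f = 0) :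
    IsNilpotent (nilEval hu f) := by
  obtain ⟨g, rfl⟩ := X_dvd_iff.2 hf
  rw [map_mul, nilEval_X]
  have : Commute u (nilEval hu g) := by
    simpa using (Commute.all X g).map (nilEval hu)
  exact this.isNilpotent_mul_right hu

theorem nilEval_subst (hu : IsNilpotent u) {g : R⟦X⟧} (hg : constantCoeff g = 0) (f : R⟦X⟧) :
    nilEval hu (f.subst g) = nilEval (isNilpotent_nilEval hu hg) f := by
  have hs : HasSubst g := .of_constantCoeff_zero' hg
  have hw := isNilpotent_nilEval hu hg
  obtain ⟨K, hK⟩ := id hw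
  have hf := eq_shift_mul_X_pow_add_trunc K f
  set p := trunc K f
  calc nilEval hu (f.subst g)
      = nilEval hu ((p : R⟦X⟧).subst g) := by
        rw [hf, ← coe_substAlgHom hs, map_add, map_mul, map_pow, substAlgHom_X, map_add, map_mul,
          map_pow, hK, mul_zero, zero_add]
    _ = nilEval hw (p : R⟦X⟧) := by
        rw [subst_coe hs, ← Polynomial.aeval_algHom_apply, nilEval_coe]
    _ = nilEval hw f := by
        rw [hf, map_add, map_mul, map_pow, nilEval_X, hK, mul_zero, zero_add]

theorem nilEval_exp [Algebra ℚ A] (hu : IsNilpotent u) :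
    nilEval hu (PowerSeries.exp ℚ) = IsNilpotent.exp u := by
  rw [IsNilpotent.exp_eq_sum (pow_nilpotencyClass hu),
    nilEval_eq_sum hu (pow_nilpotencyClass hu)]
  simp [coeff_exp]

theorem one_add_X_mul_derivative_log (B : Type*) [CommRing B] [Algebra ℚ B] :
    (1 + X) * derivative B (log B) = 1 := by
  ext n
  cases n <;> simp [deriv_log, add_mul, coeff_succ_X_mul, pow_succ, coeff_one]

theorem log_subst_exp_sub_one (B : Type*) [CommRing B] [Algebra ℚ B] :
    (log B).subst (exp B - 1) = X := by
  have := IsAddTorsionFree.of_module_rat B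
  have hs : HasSubst (exp B - 1) := .exp_sub_one
  refine derivative.ext ?_ ?_
  · have h := congrArg (substAlgHom hs) (one_add_X_mul_derivative_log B)
    rw [map_mul, map_add, map_one, substAlgHom_X, add_sub_cancel, coe_substAlgHom] at h
    rw [derivative_subst hs, map_sub, derivative_exp]
    simp [mul_comm, h]
  · rw [← logOf_eq, constantCoeff_logOf constantCoeff_exp, constantCoeff_X]

theorem exp_sub_one_subst_log (B : Type*) [CommRing B] [Algebra ℚ B] :
    (exp B - 1).subst (log B) = X := by
  obtain ⟨f, hf⟩ : ∃ f : B⟦X⟧, f.subst (log B) = X :=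
    ⟨_, subst_substInvOfIsUnit_left _ constantCoeff_log (by simp)⟩
  suffices exp B - 1 = f by rw [this, hf]
  calc exp B - 1
      = subst (exp B - 1) (subst (log B) f) := by rw [hf, subst_X .exp_sub_one]
    _ = subst (subst (exp B - 1) (log B)) f := subst_comp_subst_apply .log .exp_sub_one f
    _ = f := by
      rw [log_subst_exp_sub_one, ← map_algebraMap_eq_subst_X, Algebra.algebraMap_self, map_id, id]

end NilpotentEvaluation

section NilpotentLogarithm

open PowerSeries

variable {B : Type*} [Ring B] [Algebra ℚ B] {u : B}

/-- The logarithm `log (1 + u)` of a unipotent element. -/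
noncomputable def nilLog (hu : IsNilpotent u) : B := nilEval hu (log ℚ)

theorem isNilpotent_nilLog (hu : IsNilpotent u) : IsNilpotent (nilLog hu) :=
  isNilpotent_nilEval hu constantCoeff_log

theorem exp_nilLog (hu : IsNilpotent u) : IsNilpotent.exp (nilLog hu) = 1 + u := by
  have h := nilEval_subst hu (constantCoeff_log (A := ℚ)) (exp ℚ - 1)
  rw [exp_sub_one_subst_log, nilEval_X, map_sub, map_one, nilEval_exp] at h
  exact (sub_eq_iff_eq_add'.1 h.symm)

theorem nilLog_exp_sub_one {w : B} (hw : IsNilpotent w) :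
    nilLog (IsNilpotent.isNilpotent_exp_sub_one hw) = w := by
  have hc : constantCoeff (exp ℚ - 1) = 0 := by simp
  have h : nilEval hw (exp ℚ - 1) = IsNilpotent.exp w - 1 := by
    rw [map_sub, map_one, nilEval_exp]
  have h' := nilEval_subst hw hc (log ℚ)
  rw [log_subst_exp_sub_one, nilEval_X] at h'
  rw [nilLog]
  simp only [← h]
  exact h'.symm

end NilpotentLogarithm

section Commutator

variable {A : Type*} [Ring A] [Algebra ℚ A]

/-- The commutator bracket `[a, b] = a * b - b * a` as a bilinear map, so that `commBk A a` is the
inner derivation `ad a`. -/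
noncomputable def commBk (A : Type*) [Ring A] [Algebra ℚ A] : A →ₗ[ℚ] A →ₗ[ℚ] A :=
  LinearMap.mul ℚ A - (LinearMap.mul ℚ A).flip

@[simp]
theorem commBk_apply (a b : A) : commBk A a b = a * b - b * a := rfl

theorem commBk_eq_mulLeft_add_mulRight_neg (a : A) :
    commBk A a = LinearMap.mulLeft ℚ a + LinearMap.mulRight ℚ (-a) := by
  ext b
  simp [sub_eq_add_neg]

theorem isNilpotent_commBk {a : A} (ha : IsNilpotent a) :
    IsNilpotent (commBk A a : Module.End ℚ A) := by
  rw [commBk_eq_mulLeft_add_mulRight_neg]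
  exact (LinearMap.commute_mulLeft_right (R := ℚ) a (-a)).isNilpotent_add
    ((LinearMap.isNilpotent_mulLeft_iff ℚ a).2 ha)
    ((LinearMap.isNilpotent_mulRight_iff ℚ (-a)).2 ha.neg)

theorem exp_mulRight {a : A} (ha : IsNilpotent a) :
    IsNilpotent.exp (LinearMap.mulRight ℚ a) = LinearMap.mulRight ℚ (IsNilpotent.exp a) := by
  obtain ⟨k, hk⟩ := ha
  have hk' : LinearMap.mulRight ℚ a ^ k = 0 := by
    rw [LinearMap.pow_mulRight, hk, LinearMap.mulRight_zero_eq_zero]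
  ext b
  simp [IsNilpotent.exp_eq_sum hk, IsNilpotent.exp_eq_sum hk', LinearMap.sum_apply, Finset.mul_sum,
    LinearMap.pow_mulRight]

theorem exp_commBk_apply {a : A} (ha : IsNilpotent a) (b : A) :
    IsNilpotent.exp (commBk A a : Module.End ℚ A) b =
      IsNilpotent.exp a * b * IsNilpotent.exp (-a) := by
  have hleft : IsNilpotent.exp (LinearMap.mulLeft ℚ a) = LinearMap.mulLeft ℚ (IsNilpotent.exp a) :=
    (IsNilpotent.map_exp ha (Algebra.lmul ℚ A)).symm
  rw [commBk_eq_mulLeft_add_mulRight_neg,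
    IsNilpotent.exp_add_of_commute (LinearMap.commute_mulLeft_right a (-a))
      ((LinearMap.isNilpotent_mulLeft_iff ℚ a).2 ha)
      ((LinearMap.isNilpotent_mulRight_iff ℚ (-a)).2 ha.neg), hleft, exp_mulRight ha.neg]
  simp [mul_assoc]

theorem exp_commBk_eq_mul {x y z : A} (hx : IsNilpotent x) (hy : IsNilpotent y)
    (hz : IsNilpotent z) (h : IsNilpotent.exp z = IsNilpotent.exp x * IsNilpotent.exp y) :
    IsNilpotent.exp (commBk A z : Module.End ℚ A) =
      IsNilpotent.exp (commBk A x : Module.End ℚ A) *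
        IsNilpotent.exp (commBk A y : Module.End ℚ A) := by
  have hneg : IsNilpotent.exp (-z) = IsNilpotent.exp (-y) * IsNilpotent.exp (-x) := by
    refine left_inv_eq_right_inv (IsNilpotent.exp_neg_mul_exp_self hz) ?_
    rw [h, mul_assoc, ← mul_assoc _ _ (IsNilpotent.exp (-x)),
      IsNilpotent.exp_mul_exp_neg_self hy, one_mul, IsNilpotent.exp_mul_exp_neg_self hx]
  ext b
  simp only [Module.End.mul_apply, exp_commBk_apply hx, exp_commBk_apply hy, exp_commBk_apply hz,
    h, hneg, mul_assoc]

end Commutator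

section WordKernel

variable {A V : Type*} [Ring A] [Algebra ℚ A] [AddCommGroup V] [Module ℚ V] [Module A V]
  [IsScalarTower ℚ A V] {S : Set A} {N : ℕ}

/-- The vectors killed by every word of length at least `N` in the letters `S`. -/
def wordKernel (S : Set A) (N : ℕ) : Submodule ℚ V where
  carrier := {v | ∀ l : List A, (∀ a ∈ l, a ∈ S) → N ≤ l.length → l.prod • v = 0}
  zero_mem' _ _ _ := smul_zero _
  add_mem' hv hw l hl hN := by rw [smul_add, hv l hl hN, hw l hl hN, add_zero]
  smul_mem' c v hv l hl hN := by rw [smul_algebra_smul_comm, hv l hl hN, smul_zero]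

theorem mem_wordKernel_image {M : Type*} {f : M → A} {T : Set M} {v : V} :
    v ∈ wordKernel (f '' T) N ↔
      ∀ l : List M, (∀ a ∈ l, a ∈ T) → N ≤ l.length → (l.map f).prod • v = 0 := by
  refine ⟨fun h l hl hN => h _ ?_ (by simpa using hN), fun h l hl hN => ?_⟩
  · simpa using fun a ha => ⟨a, hl a ha, rfl⟩
  · choose g hgT hg using hl
    have hmap : (l.pmap g fun _ => id).map f = l := by simp [List.map_pmap, hg]
    rw [← hmap]
    refine h _ (fun a ha => ?_) (by simpa using hN)
    obtain ⟨b, hb, rfl⟩ := List.mem_pmap.1 ha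
    exact hgT b hb

theorem pow_smul_eq_zero_of_mem_wordKernel {a : A} (ha : a ∈ S) {v : V}
    (hv : v ∈ wordKernel S N) {k : ℕ} (hk : N ≤ k) : a ^ k • v = 0 := by
  rw [← List.prod_replicate]
  exact hv _ (fun b hb => List.eq_of_mem_replicate hb ▸ ha) (by simpa using hk)

theorem isNilpotent_of_one_mem_wordKernel (h : (1 : A) ∈ wordKernel S N) {a : A} (ha : a ∈ S) :
    IsNilpotent a :=
  ⟨N, by simpa using pow_smul_eq_zero_of_mem_wordKernel ha h le_rfl⟩

theorem smul_mem_wordKernel {a : A} (ha : a ∈ S) {v : V} (hv : v ∈ wordKernel S N) :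
    a • v ∈ wordKernel S N := by
  intro l hl hN
  have h := hv (l ++ [a]) (by simpa [or_imp, forall_and] using ⟨hl, ha⟩) (by grind)
  rwa [List.prod_append, List.prod_singleton, mul_smul] at h

theorem pow_smul_mem_wordKernel {a : A} (ha : a ∈ S) {v : V} (hv : v ∈ wordKernel S N) (k : ℕ) :
    a ^ k • v ∈ wordKernel S N := by
  induction k with
  | zero => simpa
  | succ k ih =>
    rw [pow_succ', mul_smul]
    exact smul_mem_wordKernel ha ih

theorem exp_smul_of_mem_wordKernel {a : A} (ha : a ∈ S) (hnil : IsNilpotent a) {v : V}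
    (hv : v ∈ wordKernel S N) :
    IsNilpotent.exp a • v = ∑ k ∈ Finset.range (N + 1), (k.factorial : ℚ)⁻¹ • a ^ k • v :=
  IsNilpotent.exp_smul_eq_sum (pow_smul_eq_zero_of_mem_wordKernel ha hv N.le_succ) hnil

theorem exp_smul_mem_wordKernel {a : A} (ha : a ∈ S) (hnil : IsNilpotent a) {v : V}
    (hv : v ∈ wordKernel S N) : IsNilpotent.exp a • v ∈ wordKernel S N := by
  rw [exp_smul_of_mem_wordKernel ha hnil hv]
  exact sum_mem fun k _ => Submodule.smul_mem _ _ (pow_smul_mem_wordKernel ha hv k)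

end WordKernel

section BlockWord

variable {M : Type*}

/-- The word `x ^ p₁ y ^ q₁ x ^ p₂ y ^ q₂ ⋯` with blocks of exponents `(pᵢ, qᵢ)`; its bracket is the
Dynkin term `dynkinTermBk`. -/
def blockWord (x y : M) (ps : List (ℕ × ℕ)) : List M :=
  (ps.map fun pq => List.replicate pq.1 x ++ List.replicate pq.2 y).flatten

theorem forall_mem_blockWord {p : M → Prop} {x y : M} (hx : p x) (hy : p y) (ps : List (ℕ × ℕ)) :
    ∀ a ∈ blockWord x y ps, p a := by
  intro a ha
  obtain ⟨_, ⟨pq, -, rfl⟩, ha⟩ : ∃ l, (∃ pq ∈ ps, _ = l) ∧ a ∈ l := by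
    simpa only [blockWord, List.mem_flatten, List.mem_map] using ha
  rcases List.mem_append.1 ha with ha | ha <;> rwa [List.eq_of_mem_replicate ha]

theorem map_blockWord {M' : Type*} (f : M → M') (x y : M) (ps : List (ℕ × ℕ)) :
    (blockWord x y ps).map f = blockWord (f x) (f y) ps := by
  simp [blockWord, List.map_flatten, Function.comp_def]

theorem length_blockWord (x y : M) (ps : List (ℕ × ℕ)) :
    (blockWord x y ps).length = (ps.map fun pq => pq.1 + pq.2).sum := by
  simp [blockWord, Function.comp_def]

theorem prod_blockWord [Monoid M] (x y : M) (ps : List (ℕ × ℕ)) :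
    (blockWord x y ps).prod = (ps.map fun pq => x ^ pq.1 * y ^ pq.2).prod := by
  simp [blockWord, List.prod_flatten, Function.comp_def]

end BlockWord

section BlockCoeff

open scoped Nat

/-- The coefficient of `x ^ p * y ^ q` in `exp x * exp y - 1`. -/
def blockCoeff (pq : ℕ × ℕ) : ℚ :=
  if 0 < pq.1 + pq.2 then ((pq.1 ! * pq.2 ! : ℕ) : ℚ)⁻¹ else 0

theorem prod_map_blockCoeff (ps : List (ℕ × ℕ)) :
    (ps.map blockCoeff).prod = if ∀ pq ∈ ps, 0 < pq.1 + pq.2 then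
      (((ps.map fun pq => pq.1 ! * pq.2 !).prod : ℕ) : ℚ)⁻¹ else 0 := by
  induction ps with
  | nil => simp
  | cons pq ps ih =>
    simp only [List.map_cons, List.prod_cons, ih, List.forall_mem_cons, blockCoeff]
    by_cases hpq : 0 < pq.1 + pq.2
    · simp only [hpq, if_true, true_and, mul_ite, mul_zero]
      rw [← mul_inv, ← Nat.cast_mul]
    · simp only [hpq, if_false, false_and, zero_mul]

theorem length_le_length_blockWord {M : Type*} (x y : M) {ps : List (ℕ × ℕ)}
    (h : ∀ pq ∈ ps, 0 < pq.1 + pq.2) : ps.length ≤ (blockWord x y ps).length := by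
  rw [length_blockWord]
  simpa using List.length_le_sum_of_one_le (ps.map fun pq => pq.1 + pq.2) (List.forall_mem_map.2 h)

theorem dynkinCoeff_mul_length_blockWord {M : Type*} (x y : M) {ps : List (ℕ × ℕ)}
    (hps : ps ≠ []) :
    dynkinCoeff ps * (blockWord x y ps).length =
      (-1) ^ (ps.length - 1) / (ps.length : ℚ) * (ps.map blockCoeff).prod := by
  simp only [dynkinCoeff, prod_map_blockCoeff, List.all_eq_true, decide_eq_true_eq]
  split_ifs with h
  · have hlen : ((blockWord x y ps).length : ℚ) ≠ 0 := by
      have := length_le_length_blockWord x y h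
      have := List.length_pos_iff.2 hps
      exact_mod_cast (by omega)
    rw [← length_blockWord x y]
    field_simp
  · simp

end BlockCoeff

section BlockSum

variable {A : Type*} [Ring A] [Algebra ℚ A]

/-- The expansion of `exp x * exp y - 1`, truncated at the degree `N` in each of `x` and `y`. -/
noncomputable def blockSum (N : ℕ) (x y : A) : A :=
  ∑ a : Fin (N + 1) × Fin (N + 1),
    blockCoeff ((a.1 : ℕ), (a.2 : ℕ)) • (x ^ (a.1 : ℕ) * y ^ (a.2 : ℕ))

/-- The list of exponents attached to a summation index of `bch`. -/
def exponents {N n : ℕ} (f : Fin n → Fin (N + 1) × Fin (N + 1)) : List (ℕ × ℕ) :=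
  List.ofFn fun i => (((f i).1 : ℕ), ((f i).2 : ℕ))

@[simp]
theorem length_exponents {N n : ℕ} (f : Fin n → Fin (N + 1) × Fin (N + 1)) :
    (exponents f).length = n :=
  List.length_ofFn

theorem blockSum_pow (N n : ℕ) (x y : A) :
    blockSum N x y ^ n = ∑ f : Fin n → Fin (N + 1) × Fin (N + 1),
      ((exponents f).map blockCoeff).prod • (blockWord x y (exponents f)).prod := by
  rw [← MultilinearMap.mkPiAlgebraFin_apply_const (R := ℚ)]
  simp only [blockSum, MultilinearMap.map_sum, MultilinearMap.map_smul_univ]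
  simp only [MultilinearMap.mkPiAlgebraFin_apply, prod_blockWord, exponents, List.map_ofFn,
    List.prod_ofFn, Function.comp_def]

theorem sum_mul_sum_sub_one_eq_blockSum (N : ℕ) (x y : A) :
    (∑ p ∈ Finset.range (N + 1), (p.factorial : ℚ)⁻¹ • x ^ p) *
      (∑ q ∈ Finset.range (N + 1), (q.factorial : ℚ)⁻¹ • y ^ q) - 1 = blockSum N x y := by
  have h (a : Fin (N + 1) × Fin (N + 1)) :
      ((a.1 : ℕ).factorial : ℚ)⁻¹ • x ^ (a.1 : ℕ) * ((a.2 : ℕ).factorial : ℚ)⁻¹ • y ^ (a.2 : ℕ) =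
        blockCoeff ((a.1 : ℕ), (a.2 : ℕ)) • (x ^ (a.1 : ℕ) * y ^ (a.2 : ℕ)) +
          if a = 0 then 1 else 0 := by
    rcases eq_or_ne a 0 with rfl | ha
    · simp [blockCoeff]
    · have hpos : 0 < (a.1 : ℕ) + (a.2 : ℕ) := by
        contrapose! ha
        exact Prod.ext (Fin.val_eq_zero_iff.1 (by omega)) (Fin.val_eq_zero_iff.1 (by omega))
      rw [smul_mul_smul_comm]
      simp [ha, blockCoeff, hpos, mul_comm]
  simp only [Finset.sum_range, Finset.sum_mul_sum]
  rw [← Fintype.sum_prod_type', Finset.sum_congr rfl fun a _ => h a, Finset.sum_add_distrib]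
  simp [blockSum]

variable {V : Type*} [AddCommGroup V] [Module ℚ V] [Module A V] [IsScalarTower ℚ A V]
  {x y : A} {N : ℕ} {v : V}

theorem blockSum_pow_smul_eq_zero (hv : v ∈ wordKernel {x, y} N) {n : ℕ} (hn : N ≤ n) :
    blockSum N x y ^ n • v = 0 := by
  rw [blockSum_pow, Finset.sum_smul]
  refine Finset.sum_eq_zero fun f _ => ?_
  rw [prod_map_blockCoeff, smul_assoc]
  split_ifs with hf
  · have hlen := length_le_length_blockWord x y hf
    rw [length_exponents] at hlen
    rw [hv _ (forall_mem_blockWord (by simp) (by simp) _) (hn.trans hlen), smul_zero]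
  · rw [zero_smul]

theorem blockSum_smul_mem_wordKernel (hv : v ∈ wordKernel {x, y} N) :
    blockSum N x y • v ∈ wordKernel {x, y} N := by
  rw [blockSum, Finset.sum_smul]
  refine sum_mem fun a _ => ?_
  rw [smul_assoc, mul_smul]
  exact Submodule.smul_mem _ _ <|
    pow_smul_mem_wordKernel (by simp) (pow_smul_mem_wordKernel (by simp) hv _) _

theorem exp_mul_exp_sub_one_smul (hx : IsNilpotent x) (hy : IsNilpotent y)
    (hv : v ∈ wordKernel {x, y} N) :
    (IsNilpotent.exp x * IsNilpotent.exp y - 1) • v = blockSum N x y • v := by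
  have hy' : y ∈ ({x, y} : Set A) := by simp
  rw [← sum_mul_sum_sub_one_eq_blockSum, sub_smul, sub_smul, mul_smul, mul_smul,
    exp_smul_of_mem_wordKernel (by simp) hx (exp_smul_mem_wordKernel hy' hy hv),
    exp_smul_of_mem_wordKernel hy' hy hv]
  simp only [Finset.sum_smul, smul_assoc]

theorem exp_mul_exp_sub_one_pow_smul (hx : IsNilpotent x) (hy : IsNilpotent y)
    (hv : v ∈ wordKernel {x, y} N) (n : ℕ) :
    (IsNilpotent.exp x * IsNilpotent.exp y - 1) ^ n • v = blockSum N x y ^ n • v := by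
  induction n generalizing v with
  | zero => simp
  | succ n ih =>
    rw [pow_succ, pow_succ, mul_smul, mul_smul, exp_mul_exp_sub_one_smul hx hy hv,
      ih (blockSum_smul_mem_wordKernel hv)]

theorem isNilpotent_exp_mul_exp_sub_one (h : (1 : A) ∈ wordKernel {x, y} N) :
    IsNilpotent (IsNilpotent.exp x * IsNilpotent.exp y - 1) := by
  have hx := isNilpotent_of_one_mem_wordKernel h (a := x) (by simp)
  have hy := isNilpotent_of_one_mem_wordKernel h (a := y) (by simp)
  refine ⟨N, ?_⟩
  have hN := exp_mul_exp_sub_one_pow_smul hx hy h N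
  rwa [blockSum_pow_smul_eq_zero h le_rfl, smul_eq_mul, mul_one] at hN

theorem nilLog_exp_mul_exp_smul (hx : IsNilpotent x) (hy : IsNilpotent y)
    (hu : IsNilpotent (IsNilpotent.exp x * IsNilpotent.exp y - 1))
    (hv : v ∈ wordKernel {x, y} N) :
    nilLog hu • v =
      ∑ n ∈ Finset.range N, ((-1) ^ n / ((n + 1 : ℕ) : ℚ)) • blockSum N x y ^ (n + 1) • v := by
  have hpow := exp_mul_exp_sub_one_pow_smul hx hy hv
  rw [nilLog, nilEval_smul_eq_sum hu (K := N + 1)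
    (by rw [hpow, blockSum_pow_smul_eq_zero hv N.le_succ]), Finset.sum_range_succ']
  simp only [hpow]
  simp [pow_succ]

end BlockSum

section WordBracket

variable {L : Type*} [AddCommGroup L] [Module ℚ L] (bk : L →ₗ[ℚ] L →ₗ[ℚ] L)

theorem wordBk_cons {l : List L} (hl : l ≠ []) (a : L) :
    wordBk bk (a :: l) = bk a (wordBk bk l) := by
  cases l with
  | nil => exact absurd rfl hl
  | cons b l => rfl

theorem bch_eq_sum (N : ℕ) (x y : L) :
    bch bk N x y = ∑ n ∈ Finset.range N, ∑ f : Fin (n + 1) → Fin (N + 1) × Fin (N + 1),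
      dynkinCoeff (exponents f) • wordBk bk (blockWord x y (exponents f)) := rfl

variable {bk} {g : Submodule ℚ L}

theorem wordBk_mem (hg : ∀ a ∈ g, ∀ b ∈ g, bk a b ∈ g) {l : List L} (hl : ∀ a ∈ l, a ∈ g) :
    wordBk bk l ∈ g := by
  induction l with
  | nil => exact zero_mem g
  | cons a l ih =>
    obtain ⟨ha, hl⟩ := List.forall_mem_cons.1 hl
    rcases eq_or_ne l [] with rfl | hne
    · exact ha
    · rw [wordBk_cons bk hne]
      exact hg a ha _ (ih hl)

variable {L' : Type*} [AddCommGroup L'] [Module ℚ L'] {bk' : L' →ₗ[ℚ] L' →ₗ[ℚ] L'}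
  {φ : L →ₗ[ℚ] L'}

theorem map_wordBk (hg : ∀ a ∈ g, ∀ b ∈ g, bk a b ∈ g)
    (hφ : ∀ a ∈ g, ∀ b ∈ g, φ (bk a b) = bk' (φ a) (φ b)) {l : List L} (hl : ∀ a ∈ l, a ∈ g) :
    φ (wordBk bk l) = wordBk bk' (l.map φ) := by
  induction l with
  | nil => exact map_zero φ
  | cons a l ih =>
    obtain ⟨ha, hl⟩ := List.forall_mem_cons.1 hl
    rcases eq_or_ne l [] with rfl | hne
    · rfl
    · rw [wordBk_cons bk hne, hφ a ha _ (wordBk_mem hg hl), ih hl, List.map_cons,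
        wordBk_cons bk' (by simpa using hne)]

theorem map_bch (hg : ∀ a ∈ g, ∀ b ∈ g, bk a b ∈ g)
    (hφ : ∀ a ∈ g, ∀ b ∈ g, φ (bk a b) = bk' (φ a) (φ b)) {x y : L} (hx : x ∈ g) (hy : y ∈ g)
    (N : ℕ) : φ (bch bk N x y) = bch bk' N (φ x) (φ y) := by
  have hword (ps : List (ℕ × ℕ)) :
      φ (wordBk bk (blockWord x y ps)) = wordBk bk' (blockWord (φ x) (φ y) ps) := by
    rw [map_wordBk hg hφ (forall_mem_blockWord hx hy ps), map_blockWord]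
  simp only [bch_eq_sum, map_sum, map_smul, hword]

end WordBracket

section Grading

variable {A : Type*} [Ring A] [Algebra ℚ A] {e : A}

theorem commBk_mul (e a b : A) : commBk A e (a * b) = commBk A e a * b + a * commBk A e b := by
  simp only [commBk_apply]
  noncomm_ring

theorem commBk_commBk (e a b : A) :
    commBk A e (commBk A a b) = commBk A (commBk A e a) b + commBk A a (commBk A e b) := by
  simp only [commBk_apply]
  noncomm_ring

theorem commBk_prod {l : List A} (hl : ∀ a ∈ l, commBk A e a = a) :
    commBk A e l.prod = (l.length : ℚ) • l.prod := by
  induction l with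
  | nil => simp
  | cons a l ih =>
    obtain ⟨ha, hl⟩ := List.forall_mem_cons.1 hl
    rw [List.prod_cons, commBk_mul, ha, ih hl, mul_smul_comm, List.length_cons, Nat.cast_succ,
      add_smul, one_smul, add_comm]

theorem commBk_wordBk {l : List A} (hl : ∀ a ∈ l, commBk A e a = a) :
    commBk A e (wordBk (commBk A) l) = (l.length : ℚ) • wordBk (commBk A) l := by
  induction l with
  | nil => simp [wordBk]
  | cons a l ih =>
    obtain ⟨ha, hl⟩ := List.forall_mem_cons.1 hl
    rcases eq_or_ne l [] with rfl | hne
    · simpa [wordBk] using ha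
    · rw [wordBk_cons _ hne, commBk_commBk, ha, ih hl, map_smul, List.length_cons, Nat.cast_succ,
        add_smul, one_smul, add_comm]

theorem prod_map_commBk_apply {l : List A} (hne : l ≠ []) (hl : ∀ a ∈ l, commBk A e a = a) :
    (l.map (commBk A)).prod e = -wordBk (commBk A) l := by
  induction l with
  | nil => exact absurd rfl hne
  | cons a l ih =>
    obtain ⟨ha, hl⟩ := List.forall_mem_cons.1 hl
    rw [List.map_cons, List.prod_cons, Module.End.mul_apply]
    rcases eq_or_ne l [] with rfl | hne'
    · simpa [wordBk] using congrArg Neg.neg ha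
    · rw [ih hne' hl, map_neg, wordBk_cons _ hne']

theorem prod_mul_wordBk_mul_prod_eq_zero {S : Set A} {N : ℕ} (h : (1 : A) ∈ wordKernel S N)
    {l : List A} (hne : l ≠ []) (hl : ∀ a ∈ l, a ∈ S) {u v : List A} (hu : ∀ a ∈ u, a ∈ S)
    (hv : ∀ a ∈ v, a ∈ S) (hN : N ≤ u.length + l.length + v.length) :
    u.prod * wordBk (commBk A) l * v.prod = 0 := by
  induction l generalizing u v with
  | nil => exact absurd rfl hne
  | cons a l ih =>
    obtain ⟨ha, hl⟩ := List.forall_mem_cons.1 hl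
    rw [List.length_cons] at hN
    rcases eq_or_ne l [] with rfl | hne'
    · have := h (u ++ a :: v) (by simp_all [or_imp]) (by grind)
      simpa [wordBk, mul_assoc] using this
    · have h₁ := ih hne' hl (u := u ++ [a]) (by simp_all [or_imp]) hv
        (by grind)
      have h₂ := ih hne' hl hu (v := a :: v) (by simp_all) (by grind)
      rw [wordBk_cons _ hne', commBk_apply, mul_sub, sub_mul]
      simp only [List.prod_append, List.prod_cons, List.prod_nil, mul_one, ← mul_assoc] at h₁ h₂ ⊢
      rw [h₁, h₂, sub_zero]

theorem mem_wordKernel_image_commBk {S : Set A} {N : ℕ} (hS : ∀ a ∈ S, commBk A e a = a)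
    (h : (1 : A) ∈ wordKernel S N) :
    e ∈ wordKernel ((commBk A : A → Module.End ℚ A) '' S) N := by
  refine mem_wordKernel_image.2 fun l hlS hN => ?_
  rw [Module.End.smul_def]
  rcases eq_or_ne l [] with rfl | hne
  · simpa using congrArg (· * e) (h [] (by simp) hN)
  · rw [prod_map_commBk_apply hne fun a ha => hS a (hlS a ha)]
    simpa using prod_mul_wordBk_mul_prod_eq_zero h hne hlS (u := []) (v := []) (by simp) (by simp)
      (by simpa using hN)

/-- The span of the elements of positive integral weight for the derivation `[e, ·]`. -/
noncomputable def positivePart (e : A) : Submodule ℚ A :=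
  ⨆ n : ℕ, Module.End.eigenspace (commBk A e) ((n : ℚ) + 1)

theorem mem_positivePart_of_commBk_eq_smul {a : A} {n : ℕ} (hn : n ≠ 0)
    (ha : commBk A e a = (n : ℚ) • a) :
    a ∈ positivePart e := by
  obtain ⟨n, rfl⟩ := Nat.exists_eq_succ_of_ne_zero hn
  refine Submodule.mem_iSup_of_mem n (Module.End.mem_eigenspace_iff.2 ?_)
  rwa [← Nat.cast_succ]

theorem prod_mem_positivePart {l : List A} (hne : l ≠ []) (hl : ∀ a ∈ l, commBk A e a = a) :
    l.prod ∈ positivePart e :=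
  mem_positivePart_of_commBk_eq_smul (by simpa using hne) (commBk_prod hl)

theorem wordBk_mem_positivePart {l : List A} (hl : ∀ a ∈ l, commBk A e a = a) :
    wordBk (commBk A) l ∈ positivePart e := by
  rcases eq_or_ne l [] with rfl | hne
  · exact zero_mem _
  · exact mem_positivePart_of_commBk_eq_smul (by simpa using hne) (commBk_wordBk hl)

theorem injOn_commBk_positivePart (e : A) : Set.InjOn (commBk A e) (positivePart e) := by
  refine LinearMap.injOn_of_disjoint_ker subset_rfl ?_
  rw [← Module.End.eigenspace_zero]
  refine ((Module.End.eigenspaces_iSupIndep (commBk A e)) 0).symm.mono_left (iSup_le fun n => ?_)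
  exact le_iSup₂_of_le ((n : ℚ) + 1) (by positivity) le_rfl

variable {x y : A} {N : ℕ}

theorem bch_mem_positivePart (hx : commBk A e x = x) (hy : commBk A e y = y) (N : ℕ) :
    bch (commBk A) N x y ∈ positivePart e := by
  rw [bch_eq_sum]
  refine sum_mem fun n _ => sum_mem fun f _ => Submodule.smul_mem _ _ ?_
  exact wordBk_mem_positivePart (forall_mem_blockWord (p := fun a => commBk A e a = a) hx hy _)

theorem blockSum_pow_mem_positivePart (hx : commBk A e x = x) (hy : commBk A e y = y) (N : ℕ)
    {n : ℕ} (hn : n ≠ 0) : blockSum N x y ^ n ∈ positivePart e := by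
  rw [blockSum_pow]
  refine sum_mem fun f _ => ?_
  rw [prod_map_blockCoeff]
  split_ifs with hf
  · have hlen := length_le_length_blockWord x y hf
    rw [length_exponents] at hlen
    exact Submodule.smul_mem _ _ (prod_mem_positivePart (List.ne_nil_of_length_pos (by omega))
      (forall_mem_blockWord (p := fun a => commBk A e a = a) hx hy _))
  · rw [zero_smul]
    exact zero_mem _

theorem commBk_bch (hx : commBk A e x = x) (hy : commBk A e y = y) (N : ℕ) :
    commBk A e (bch (commBk A) N x y) = -∑ n ∈ Finset.range N,
      ((-1) ^ n / ((n + 1 : ℕ) : ℚ)) • (blockSum N (commBk A x : Module.End ℚ A) (commBk A y) ^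
        (n + 1)) e := by
  rw [bch_eq_sum, map_sum, ← Finset.sum_neg_distrib]
  refine Finset.sum_congr rfl fun n _ => ?_
  rw [map_sum, blockSum_pow, LinearMap.sum_apply, Finset.smul_sum, ← Finset.sum_neg_distrib]
  refine Finset.sum_congr rfl fun f _ => ?_
  have hletter := forall_mem_blockWord (p := fun a => commBk A e a = a) hx hy (exponents f)
  have hcoeff := dynkinCoeff_mul_length_blockWord x y (ps := exponents f)
    (List.ne_nil_of_length_pos (by simp))
  rw [length_exponents, Nat.add_sub_cancel] at hcoeff
  rw [map_smul, commBk_wordBk hletter, smul_smul, hcoeff, LinearMap.smul_apply, smul_smul,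
    ← smul_neg, ← map_blockWord]
  by_cases hne : blockWord x y (exponents f) = []
  · rw [← hcoeff, hne, List.length_nil, Nat.cast_zero, mul_zero, zero_smul]
    simp
  · rw [prod_map_commBk_apply hne hletter, neg_neg]

theorem nilLog_exp_mul_exp_eq_bch (hx : commBk A e x = x) (hy : commBk A e y = y)
    (h : (1 : A) ∈ wordKernel {x, y} N) :
    nilLog (isNilpotent_exp_mul_exp_sub_one h) = bch (commBk A) N x y := by
  have hxn := isNilpotent_of_one_mem_wordKernel h (a := x) (by simp)
  have hyn := isNilpotent_of_one_mem_wordKernel h (a := y) (by simp)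
  have hun := isNilpotent_exp_mul_exp_sub_one h
  set z := nilLog hun with hz
  have hzn : IsNilpotent z := isNilpotent_nilLog hun
  have hzpos : z ∈ positivePart e := by
    rw [hz, ← mul_one (nilLog _), ← smul_eq_mul, nilLog_exp_mul_exp_smul hxn hyn _ h]
    refine sum_mem fun n _ => Submodule.smul_mem _ _ ?_
    rw [smul_eq_mul, mul_one]
    exact blockSum_pow_mem_positivePart hx hy N n.succ_ne_zero
  refine injOn_commBk_positivePart e hzpos (bch_mem_positivePart hx hy N) ?_
  have hexp := exp_commBk_eq_mul hxn hyn hzn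
    (by rw [hz, exp_nilLog, add_sub_cancel])
  have hlog := nilLog_exp_sub_one (isNilpotent_commBk hzn)
  simp only [hexp] at hlog
  have he : e ∈ wordKernel {(commBk A x : Module.End ℚ A), commBk A y} N := by
    rw [← Set.image_pair (commBk A : A → Module.End ℚ A)]
    exact mem_wordKernel_image_commBk (by simp [-commBk_apply, hx, hy]) h
  calc commBk A e z = -(commBk A z e) := by simp
    _ = commBk A e (bch (commBk A) N x y) := by
      rw [commBk_bch hx hy, ← hlog]
      exact congrArg Neg.neg
        (nilLog_exp_mul_exp_smul (isNilpotent_commBk hxn) (isNilpotent_commBk hyn) _ he)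

end Grading

section ExpBch

open Polynomial

variable {A B : Type*} [Ring A] [Algebra ℚ A] [Ring B] [Algebra ℚ B] {x y : A} {N : ℕ}

theorem exp_bch_of_commBk_eq_self {e : A} (hx : commBk A e x = x) (hy : commBk A e y = y)
    (h : (1 : A) ∈ wordKernel {x, y} N) :
    IsNilpotent (bch (commBk A) N x y) ∧
      IsNilpotent.exp (bch (commBk A) N x y) = IsNilpotent.exp x * IsNilpotent.exp y := by
  have hu := isNilpotent_exp_mul_exp_sub_one h
  rw [← nilLog_exp_mul_exp_eq_bch hx hy h]
  exact ⟨isNilpotent_nilLog hu, (exp_nilLog hu).trans (add_sub_cancel _ _)⟩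

theorem map_bch_commBk (φ : A →ₐ[ℚ] B) (N : ℕ) (x y : A) :
    φ (bch (commBk A) N x y) = bch (commBk B) N (φ x) (φ y) :=
  map_bch (φ := φ.toLinearMap) (g := ⊤) (by simp) (by simp) trivial trivial N

theorem map_one_mem_wordKernel (φ : A →ₐ[ℚ] B) (h : (1 : A) ∈ wordKernel {x, y} N) :
    (1 : B) ∈ wordKernel {φ x, φ y} N := by
  rw [← Set.image_pair, mem_wordKernel_image]
  intro l hl hN
  have := h l hl hN
  simpa [map_list_prod] using congrArg φ this

theorem one_mem_wordKernel_C_mul_X (h : (1 : A) ∈ wordKernel {x, y} N) :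
    (1 : A[X]) ∈ wordKernel {C x * X, C y * X} N := by
  rw [← Set.image_pair (fun a => C a * X), mem_wordKernel_image]
  intro l hl hN
  have hprod : (l.map fun a => C a * X).prod = C l.prod * X ^ l.length := by
    clear hl hN
    induction l with
    | nil => simp
    | cons a l ih =>
      rw [List.map_cons, List.prod_cons, ih, List.prod_cons, C_mul, List.length_cons, pow_succ',
        mul_assoc, ← mul_assoc X, X_mul_C, mul_assoc, mul_assoc]
  have := h l hl hN
  rw [smul_eq_mul, mul_one] at this
  rw [hprod, this, C_0, zero_mul, zero_smul]

/-- The degree operator `X * d/dX` on polynomials: a grading of left multiplications by degree. -/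
noncomputable def degreeOp (A : Type*) [Ring A] [Algebra ℚ A] : Module.End ℚ A[X] :=
  LinearMap.mulLeft ℚ X ∘ₗ (derivative (R := A)).restrictScalars ℚ

theorem commBk_degreeOp (a : A) :
    commBk (Module.End ℚ A[X]) (degreeOp A) (Algebra.lmul ℚ A[X] (C a * X)) =
      Algebra.lmul ℚ A[X] (C a * X) := by
  ext p : 1
  have hXC (q : A[X]) : X * (C a * q) = C a * (X * q) := by
    rw [← mul_assoc, X_mul_C, mul_assoc]
  simp [degreeOp, derivative_mul, mul_add, mul_assoc, hXC]

theorem exp_bch (h : (1 : A) ∈ wordKernel {x, y} N) :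
    IsNilpotent (bch (commBk A) N x y) ∧
      IsNilpotent.exp (bch (commBk A) N x y) = IsNilpotent.exp x * IsNilpotent.exp y := by
  have hX := one_mem_wordKernel_C_mul_X h
  have hx := isNilpotent_of_one_mem_wordKernel hX (a := C x * X) (by simp)
  have hy := isNilpotent_of_one_mem_wordKernel hX (a := C y * X) (by simp)
  obtain ⟨hb, hexp⟩ := exp_bch_of_commBk_eq_self (commBk_degreeOp x) (commBk_degreeOp y)
    (map_one_mem_wordKernel (Algebra.lmul ℚ A[X]) hX)
  have hinj : Function.Injective (Algebra.lmul ℚ A[X]) := Algebra.lmul_injective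
  rw [← map_bch_commBk, IsNilpotent.map_iff hinj] at hb
  rw [← map_bch_commBk, ← IsNilpotent.map_exp hb, ← IsNilpotent.map_exp hx,
    ← IsNilpotent.map_exp hy, ← map_mul] at hexp
  let evalOne : A[X] →ₐ[ℚ] A :=
    (eval₂RingHom' (RingHom.id A) 1 fun _ => Commute.one_right _).toRatAlgHom
  have hevalOne (a : A) : evalOne (C a * X) = a := by simp [evalOne]
  have hmap := map_bch_commBk evalOne N (C x * X) (C y * X)
  rw [hevalOne, hevalOne] at hmap
  rw [← hmap]
  refine ⟨hb.map evalOne, ?_⟩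
  rw [← IsNilpotent.map_exp hb, hinj hexp, map_mul, IsNilpotent.map_exp hx,
    IsNilpotent.map_exp hy, hevalOne, hevalOne]

end ExpBch

section Gauge

variable {L : Type*} [AddCommGroup L] [Module ℚ L] {bk : L →ₗ[ℚ] L →ₗ[ℚ] L} {d : L →ₗ[ℚ] L}
  {N : ℕ}

theorem adp_succ (x : L) (n : ℕ) (z : L) : adp bk x (n + 1) z = bk x (adp bk x n z) :=
  Function.iterate_succ_apply' _ _ _

theorem adp_eq_wordBk (x : L) (n : ℕ) (z : L) :
    adp bk x n z = wordBk bk (List.replicate n x ++ [z]) := by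
  induction n with
  | zero => rfl
  | succ n ih =>
    rw [adp_succ, ih, List.replicate_succ, List.cons_append, wordBk_cons bk (by simp)]

/-- The linear action `x ↦ ((z, c) ↦ ([x, z] - c • d x, 0))` on `L × ℚ`, whose exponential
restricts to the gauge action on the affine hyperplane `c = 1`. -/
def affineAct (bk : L →ₗ[ℚ] L →ₗ[ℚ] L) (d : L →ₗ[ℚ] L) : L →ₗ[ℚ] Module.End ℚ (L × ℚ) :=
  LinearMap.mk₂ ℚ (fun x v => (bk x v.1 - v.2 • d x, 0))
    (fun x y v => Prod.ext
      (by simp only [map_add, LinearMap.add_apply, smul_add, Prod.mk_add_mk]; abel) (by simp))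
    (fun c x v => by ext <;> simp [smul_sub, smul_comm c])
    (fun x v w => Prod.ext
      (by simp only [Prod.fst_add, map_add, Prod.snd_add, add_smul, Prod.mk_add_mk]; abel)
      (by simp))
    (fun c x v => by ext <;> simp [smul_sub, mul_smul])

@[simp]
theorem affineAct_apply (x : L) (v : L × ℚ) :
    affineAct bk d x v = (bk x v.1 - v.2 • d x, 0) := rfl

theorem affineAct_bk {x y : L} (hjac : ∀ c, bk (bk x y) c = bk x (bk y c) - bk y (bk x c))
    (hd : d (bk x y) = bk x (d y) - bk y (d x)) :
    affineAct bk d (bk x y) =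
      commBk (Module.End ℚ (L × ℚ)) (affineAct bk d x) (affineAct bk d y) := by
  refine LinearMap.ext fun v => Prod.ext ?_ (by simp)
  simp only [affineAct_apply, hjac, hd, smul_sub, commBk_apply, LinearMap.sub_apply,
    Module.End.mul_apply, map_sub, map_smul, zero_smul, sub_zero, Prod.mk_sub_mk]
  abel

theorem prod_map_affineAct_apply (l : List L) (z : L) :
    (l.map (affineAct bk d)).prod (z, 0) = (wordBk bk (l ++ [z]), 0) := by
  induction l with
  | nil => rfl
  | cons a l ih =>
    rw [List.map_cons, List.prod_cons, Module.End.mul_apply, ih, List.cons_append,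
      wordBk_cons bk (by simp)]
    simp

theorem prod_map_affineAct_eq_zero (hnil : ∀ l : List L, N ≤ l.length → wordBk bk l = 0)
    {l : List L} (hne : l ≠ []) (hl : N ≤ l.length) : (l.map (affineAct bk d)).prod = 0 := by
  obtain ⟨l, a, rfl⟩ := List.eq_nil_or_concat' l |>.resolve_left hne
  refine LinearMap.ext fun v => ?_
  rw [List.map_append, List.prod_append, List.map_singleton, List.prod_singleton,
    Module.End.mul_apply, affineAct_apply, prod_map_affineAct_apply, hnil _ (by simpa using hl)]
  rfl

theorem one_mem_wordKernel_affineAct (hN : 0 < N)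
    (hnil : ∀ l : List L, N ≤ l.length → wordBk bk l = 0) (x y : L) :
    (1 : Module.End ℚ (L × ℚ)) ∈ wordKernel {affineAct bk d x, affineAct bk d y} N := by
  rw [← Set.image_pair, mem_wordKernel_image]
  intro l _ hl
  rw [prod_map_affineAct_eq_zero hnil (List.ne_nil_of_length_pos (hN.trans_le hl)) hl, zero_smul]

theorem affineAct_pow_eq_zero (hN : 0 < N)
    (hnil : ∀ l : List L, N ≤ l.length → wordBk bk l = 0) (x : L) :
    affineAct bk d x ^ N = 0 := by
  simpa using prod_map_affineAct_eq_zero (d := d) hnil (l := List.replicate N x)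
    (by simpa using hN.ne') (by simp)

theorem affineAct_pow_succ_apply (x z : L) (n : ℕ) :
    (affineAct bk d x ^ (n + 1)) (z, 1) = (adp bk x (n + 1) z - adp bk x n (d x), 0) := by
  induction n with
  | zero => simp [adp]
  | succ n ih =>
    rw [pow_succ', Module.End.mul_apply, ih]
    simp [adp_succ]

theorem exp_affineAct_apply (hN : 0 < N)
    (hnil : ∀ l : List L, N ≤ l.length → wordBk bk l = 0) (x z : L) :
    IsNilpotent.exp (affineAct bk d x) (z, 1) = (gauge bk d N x z, 1) := by
  have hz : adp bk x N z = 0 := by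
    rw [adp_eq_wordBk]
    exact hnil _ (by simp)
  have hsum : ∑ n ∈ Finset.range N, ((n.factorial : ℚ)⁻¹) • adp bk x n z =
      ∑ n ∈ Finset.range N, (((n + 1).factorial : ℚ)⁻¹) • adp bk x (n + 1) z + z := by
    have h := Finset.sum_range_succ (fun n => ((n.factorial : ℚ)⁻¹) • adp bk x n z) N
    rw [hz, smul_zero, add_zero, Finset.sum_range_succ'] at h
    simpa [adp] using h.symm
  rw [IsNilpotent.exp_eq_sum
    (pow_eq_zero_of_le N.le_succ (affineAct_pow_eq_zero hN hnil x)), Finset.sum_range_succ',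
    LinearMap.add_apply, LinearMap.sum_apply, gauge, hsum]
  simp only [LinearMap.smul_apply, affineAct_pow_succ_apply]
  ext
  · simp only [Prod.smul_mk, smul_sub, Nat.factorial_zero, Nat.cast_one, inv_one, pow_zero,
      Module.End.one_apply, one_smul, Prod.fst_add, Prod.fst_sum, Finset.sum_sub_distrib]
    abel
  · simp [Prod.snd_sum]

theorem exp_affineAct_bch {g : Submodule ℚ L} (hg : ∀ a ∈ g, ∀ b ∈ g, bk a b ∈ g)
    (hjac : ∀ a ∈ g, ∀ b ∈ g, ∀ c, bk (bk a b) c = bk a (bk b c) - bk b (bk a c))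
    (hd : ∀ a ∈ g, ∀ b ∈ g, d (bk a b) = bk a (d b) - bk b (d a)) (hN : 0 < N)
    (hnil : ∀ l : List L, N ≤ l.length → wordBk bk l = 0) {x y : L} (hx : x ∈ g) (hy : y ∈ g) :
    IsNilpotent.exp (affineAct bk d (bch bk N x y)) =
      IsNilpotent.exp (affineAct bk d x) * IsNilpotent.exp (affineAct bk d y) := by
  rw [map_bch hg (fun a ha b hb => affineAct_bk (hjac a ha b hb) (hd a ha b hb)) hx hy]
  exact (exp_bch (one_mem_wordKernel_affineAct hN hnil x y)).2

theorem gauge_is_group_action_general (g : Submodule ℚ L) (bk : L →ₗ[ℚ] L →ₗ[ℚ] L)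
    (d : L →ₗ[ℚ] L) (hg : ∀ a ∈ g, ∀ b ∈ g, bk a b ∈ g)
    (hjac : ∀ a ∈ g, ∀ b ∈ g, ∀ c, bk (bk a b) c = bk a (bk b c) - bk b (bk a c))
    (hd : ∀ a ∈ g, ∀ b ∈ g, d (bk a b) = bk a (d b) - bk b (d a))
    (N : ℕ) (hnil : ∀ l : List L, N ≤ l.length → wordBk bk l = 0)
    (x y : L) (hx : x ∈ g) (hy : y ∈ g) (z : L) :
    gauge bk d N 0 z = z ∧
      gauge bk d N x (gauge bk d N y z) = gauge bk d N (bch bk N x y) z := by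
  rcases N.eq_zero_or_pos with rfl | hN
  · have : Subsingleton L := subsingleton_of_forall_eq 0 fun a => hnil [a] (Nat.zero_le _)
    exact ⟨Subsingleton.elim _ _, Subsingleton.elim _ _⟩
  have hexp := exp_affineAct_apply (d := d) hN hnil
  constructor
  · simpa using (congrArg Prod.fst (hexp 0 z)).symm
  · have hbch := LinearMap.congr_fun (exp_affineAct_bch hg hjac hd hN hnil hx hy) (z, 1)
    rw [Module.End.mul_apply, hexp, hexp, hexp] at hbch
    exact (congrArg Prod.fst hbch).symm

end Gauge

namespace IsDGLA

variable {L : Type*} [AddCommGroup L] [Module ℚ L] {deg : ℤ → Submodule ℚ L}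
  {bk : L →ₗ[ℚ] L →ₗ[ℚ] L} {d : L →ₗ[ℚ] L} {x y : L}

theorem bk_mem_deg_zero (h : IsDGLA deg bk d) (hx : x ∈ deg 0) (hy : y ∈ deg 0) :
    bk x y ∈ deg 0 :=
  h.bk_deg 0 0 x y hx hy

theorem bk_bk_of_mem_deg_zero (h : IsDGLA deg bk d) (hx : x ∈ deg 0) (hy : y ∈ deg 0) (z : L) :
    bk (bk x y) z = bk x (bk y z) - bk y (bk x z) := by
  have hjac := h.jacobi 0 0 x y z hx hy
  rw [zero_mul, zpow_zero, one_smul] at hjac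
  rw [hjac, add_sub_cancel_right]

theorem d_bk_of_mem_deg_zero (h : IsDGLA deg bk d) (hx : x ∈ deg 0) (hy : y ∈ deg 0) :
    d (bk x y) = bk x (d y) - bk y (d x) := by
  have hanti := h.antisymm (0 - 1) 0 (d x) y (h.d_deg 0 x hx) hy
  rw [mul_zero, zpow_zero, one_smul] at hanti
  rw [h.leibniz 0 x y hx, zpow_zero, one_smul, hanti, neg_add_eq_sub]

end IsDGLA

/-- In a nilpotent differential graded Lie algebra `L`, the gauge action of
`(L₀, *)` (with the Baker-Campbell-Hausdorff product `*`) on `MC(L)` is a group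
action: `0 ∙ z = z` and `x ∙ (y ∙ z) = (x * y) ∙ z`. -/
theorem gauge_is_group_action
    {L : Type*} [AddCommGroup L] [Module ℚ L]
    (deg : ℤ → Submodule ℚ L) (bk : L →ₗ[ℚ] L →ₗ[ℚ] L) (d : L →ₗ[ℚ] L)
    (h : IsDGLA deg bk d)
    (N : ℕ) (hnil : ∀ l : List L, N ≤ l.length → wordBk bk l = 0)
    (x y : L) (hx : x ∈ deg 0) (hy : y ∈ deg 0)
    (z : L) (hz : IsMC deg bk d z) :
    gauge bk d N 0 z = z ∧
      gauge bk d N x (gauge bk d N y z) = gauge bk d N (bch bk N x y) z :=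
  gauge_is_group_action_general (deg 0) bk d (fun _ ha _ hb => h.bk_mem_deg_zero ha hb)
    (fun _ ha _ hb => h.bk_bk_of_mem_deg_zero ha hb) (fun _ ha _ hb => h.d_bk_of_mem_deg_zero ha hb)
    N hnil x y hx hy z

end Paper
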